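/- Let τ ∈ [0,1], n ≥ 1, let π be a partition of {1,…,n} and let B be a block of π. Let π' be the partition of {1,…,n+1} obtained from π by adding the element n+1 to the block B. Then m_{n+1}(A_{π'}) = (|B|·τ/((1−τ)+nτ)) · m_n(A_π), where |B| is the cardinality of B. -/

import Mathlib

open MeasureTheory

noncomputable section

/-- The circle `ℝ/ℤ`. -/
abbrev Circle1 : Type := AddCircle (1 : ℝ)

/-- The Pólya-urn type Markov kernel
`κ_n(x, ·) = ((1−τ)·λ + τ·Σ_{i=1}^n δ_{x_i}) / ((1−τ) + nτ)`. -/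
def urnKernel (τ : ℝ) {n : ℕ} (x : Fin n → Circle1) : Measure Circle1 :=
  (ENNReal.ofReal ((1 - τ) + n * τ))⁻¹ •
    (ENNReal.ofReal (1 - τ) • (volume : Measure Circle1)
      + ENNReal.ofReal τ • ∑ i : Fin n, Measure.dirac (x i))

/-- The urn measures: `m 1 = λ` and `m (n+1)` is the image of the measure–kernel
product `m n ⊗ κ_n` under `(x, y) ↦ (x_1, …, x_n, y)`.  (`m 0` is a dummy value.) -/
def urnMeasure (τ : ℝ) : (n : ℕ) → Measure (Fin n → Circle1)
  | 0 => Measure.dirac (fun i => i.elim0)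
  | 1 => (volume : Measure Circle1).map (fun y => fun _ : Fin 1 => y)
  | (n + 2) =>
      (urnMeasure τ (n + 1)).bind
        (fun x => (urnKernel τ x).map (Fin.snoc x))

/-- For a partition `π` of `{1,…,n}`, the set `A_π` of `x` with `x i = x j` iff `i`
and `j` lie in the same block of `π`. -/
def samePartSet {n : ℕ} (P : Finpartition (Finset.univ : Finset (Fin n))) :
    Set (Fin n → Circle1) :=
  {x | ∀ i j : Fin n, x i = x j ↔ ∃ B ∈ P.parts, i ∈ B ∧ j ∈ B}

theorem aux_meas_snoc (n : ℕ) :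
    Measurable (fun p : (Fin n → Circle1) × Circle1 =>
      (Fin.snoc (α := fun _ => Circle1) p.1 p.2 : Fin (n + 1) → Circle1)) := by
  refine measurable_pi_iff.2 fun i => ?_
  refine Fin.lastCases ?_ (fun j => ?_) i
  · simpa using measurable_snd
  · simp only [Fin.snoc_castSucc]
    exact (measurable_pi_apply j).comp measurable_fst

theorem aux_meas_set {n : ℕ} (P : Finpartition (Finset.univ : Finset (Fin n))) :
    MeasurableSet (samePartSet P) := by
  unfold samePartSet
  simp only [Set.ofPred_forall]
  refine MeasurableSet.iInter fun i => MeasurableSet.iInter fun j => ?_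
  by_cases h : ∃ B ∈ P.parts, i ∈ B ∧ j ∈ B
  · simp only [h, iff_true]
    exact measurableSet_eq_fun (measurable_pi_apply i) (measurable_pi_apply j)
  · simp only [h, iff_false]
    exact (measurableSet_eq_fun (measurable_pi_apply i) (measurable_pi_apply j)).compl

theorem aux_meas_kernel (τ : ℝ) (n : ℕ) :
    Measurable (fun x : Fin n → Circle1 =>
      (urnKernel τ x).map (Fin.snoc (α := fun _ => Circle1) x)) := by
  refine Measure.measurable_of_measurable_coe _ fun s hs => ?_
  have hm := aux_meas_snoc n
  have hx : ∀ x : Fin n → Circle1,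
      Measurable (Fin.snoc (α := fun _ => Circle1) x : Circle1 → Fin (n + 1) → Circle1) :=
    fun x => hm.comp measurable_prodMk_left
  have : ∀ x : Fin n → Circle1,
      (urnKernel τ x).map (Fin.snoc (α := fun _ => Circle1) x) s =
      (ENNReal.ofReal ((1 - τ) + n * τ))⁻¹ * (ENNReal.ofReal (1 - τ) *
        (volume : Measure Circle1) (Prod.mk x ⁻¹' ((fun p : (Fin n → Circle1) × Circle1 =>
      (Fin.snoc (α := fun _ => Circle1) p.1 p.2 : Fin (n + 1) → Circle1)) ⁻¹' s))
      + ENNReal.ofReal τ * ∑ i : Fin n,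
        s.indicator 1 (Fin.snoc (α := fun _ => Circle1) x (x i) : Fin (n + 1) → Circle1)) := by
    intro x
    rw [Measure.map_apply (hx x) hs]
    simp only [urnKernel, Measure.smul_apply, Measure.add_apply, smul_eq_mul,
      Measure.finsetSum_apply, Measure.dirac_apply' _ (hx x hs)]
    rfl
  simp_rw [this]
  refine Measurable.const_mul (Measurable.add (Measurable.const_mul ?_ _)
    (Measurable.const_mul (Finset.measurable_fun_sum _ fun i _ => ?_) _)) _
  · exact measurable_measure_prodMk_left (hm hs)
  · exact (measurable_one.indicator hs).comp
      (hm.comp (measurable_id.prodMk (measurable_pi_apply i)))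

theorem aux_mem {n : ℕ}
    (P : Finpartition (Finset.univ : Finset (Fin n)))
    (B : Finset (Fin n)) (hB : B ∈ P.parts)
    (P' : Finpartition (Finset.univ : Finset (Fin (n + 1))))
    (hP' : P'.parts =
      insert (insert (Fin.last n) (B.map Fin.castSuccEmb))
        ((P.parts.erase B).image (Finset.map Fin.castSuccEmb)))
    (b : Fin n) (hb : b ∈ B) (x : Fin n → Circle1) (y : Circle1) :
    (Fin.snoc (α := fun _ => Circle1) x y : Fin (n + 1) → Circle1) ∈ samePartSet P' ↔
      x ∈ samePartSet P ∧ y = x b := by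
  have h1 : ∀ i j : Fin n, (∃ C ∈ P'.parts, i.castSucc ∈ C ∧ j.castSucc ∈ C) ↔
      ∃ C ∈ P.parts, i ∈ C ∧ j ∈ C := by
    intro i j
    rw [hP']
    simp only [Finset.mem_insert, Finset.mem_image, Finset.mem_erase]
    constructor
    · rintro ⟨C, rfl | ⟨D, ⟨_, hD⟩, rfl⟩, hi, hj⟩
      · exact ⟨B, hB, by simpa [Fin.castSucc_ne_last] using hi,
          by simpa [Fin.castSucc_ne_last] using hj⟩
      · exact ⟨D, hD, by simpa using hi, by simpa using hj⟩
    · rintro ⟨D, hD, hi, hj⟩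
      by_cases h : D = B
      · subst h
        exact ⟨_, Or.inl rfl, by simp [hi], by simp [hj]⟩
      · exact ⟨_, Or.inr ⟨D, ⟨h, hD⟩, rfl⟩, by simpa using hi, by simpa using hj⟩
  have h2 : ∀ j : Fin n, (∃ C ∈ P'.parts, Fin.last n ∈ C ∧ j.castSucc ∈ C) ↔ j ∈ B := by
    intro j
    rw [hP']
    simp only [Finset.mem_insert, Finset.mem_image, Finset.mem_erase]
    constructor
    · rintro ⟨C, rfl | ⟨D, ⟨_, hD⟩, rfl⟩, hi, hj⟩
      · simpa [Fin.castSucc_ne_last] using hj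
      · simp [Fin.castSucc_ne_last] at hi
    · intro hj
      exact ⟨_, Or.inl rfl, by simp, by simp [hj]⟩
  have h3 : ∃ C ∈ P'.parts, Fin.last n ∈ C ∧ Fin.last n ∈ C :=
    ⟨_, by rw [hP']; exact Finset.mem_insert_self _ _, by simp, by simp⟩
  have h4 : ∀ j : Fin n, (∃ C ∈ P.parts, b ∈ C ∧ j ∈ C) ↔ j ∈ B := by
    intro j
    constructor
    · rintro ⟨C, hC, hbC, hj⟩
      rwa [P.eq_of_mem_parts hB hC hb hbC]
    · exact fun hj => ⟨B, hB, hb, hj⟩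
  constructor
  · intro h
    refine ⟨fun i j => ?_, ?_⟩
    · have := h i.castSucc j.castSucc
      rw [h1] at this
      simpa using this
    · have := h (Fin.last n) b.castSucc
      rw [h2] at this
      simpa [hb] using this
  · rintro ⟨h, rfl⟩ i j
    refine Fin.lastCases ?_ (fun i => ?_) i <;> refine Fin.lastCases ?_ (fun j => ?_) j
    · simp only [true_iff]
      exact h3
    · rw [h2, ← h4, ← h]; simp
    · have := h2 i
      simp only [and_comm] at this ⊢
      rw [this, ← h4, ← h]; simp [eq_comm]
    · rw [h1, ← h]; simp

/-- if `π'` is obtained from the partition `π` of `{1,…,n}` by adding the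
element `n+1` to the block `B` of `π`, then
`m_{n+1}(A_{π'}) = (|B|·τ/((1−τ)+nτ)) · m_n(A_π)`. -/
theorem urnMeasure_extend_block (τ : ℝ) (hτ0 : 0 ≤ τ) (hτ1 : τ ≤ 1)
    (n : ℕ) (hn : 1 ≤ n)
    (P : Finpartition (Finset.univ : Finset (Fin n)))
    (B : Finset (Fin n)) (hB : B ∈ P.parts)
    (P' : Finpartition (Finset.univ : Finset (Fin (n + 1))))
    (hP' : P'.parts =
      insert (insert (Fin.last n) (B.map Fin.castSuccEmb))
        ((P.parts.erase B).image (Finset.map Fin.castSuccEmb))) :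
    urnMeasure τ (n + 1) (samePartSet P')
      = ENNReal.ofReal ((B.card : ℝ) * τ / ((1 - τ) + n * τ)) * urnMeasure τ n (samePartSet P) := by
  obtain ⟨k, rfl⟩ : ∃ k, n = k + 1 := ⟨n - 1, by omega⟩
  obtain ⟨b, hb⟩ := P.nonempty_of_mem_parts hB
  have hc : 0 < (1 - τ) + ((k + 1 : ℕ) : ℝ) * τ := by
    push_cast
    nlinarith [mul_nonneg (Nat.cast_nonneg (α := ℝ) k) hτ0]
  have hS := aux_meas_set P'
  have hA := aux_meas_set P
  have key : ∀ x : Fin (k + 1) → Circle1,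
      (urnKernel τ x).map (Fin.snoc (α := fun _ => Circle1) x) (samePartSet P') =
      (samePartSet P).indicator
        (fun _ => ENNReal.ofReal ((B.card : ℝ) * τ / ((1 - τ) + ((k + 1 : ℕ) : ℝ) * τ))) x := by
    intro x
    have hsn : Measurable
        (Fin.snoc (α := fun _ => Circle1) x : Circle1 → Fin (k + 1 + 1) → Circle1) :=
      (aux_meas_snoc (k + 1)).comp measurable_prodMk_left
    rw [Measure.map_apply hsn hS]
    by_cases hx : x ∈ samePartSet P
    · have hpre : (Fin.snoc (α := fun _ => Circle1) x : Circle1 → Fin (k + 1 + 1) → Circle1) ⁻¹'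
          (samePartSet P') = {x b} := by
        ext y
        rw [Set.mem_preimage, aux_mem P B hB P' hP' b hb]
        simp [hx]
      have hcard : ∀ i, x i ∈ ({x b} : Set Circle1) ↔ i ∈ B := by
        intro i
        rw [Set.mem_singleton_iff, eq_comm, hx b i]
        constructor
        · rintro ⟨C, hC, hbC, hj⟩
          rwa [P.eq_of_mem_parts hB hC hb hbC]
        · exact fun hj => ⟨B, hB, hb, hj⟩
      rw [hpre, Set.indicator_of_mem hx]
      have hsum : ∑ i : Fin (k + 1), Measure.dirac (x i) ({x b} : Set Circle1)
          = (B.card : ENNReal) := by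
        classical
        simp only [Measure.dirac_apply' _ (measurableSet_singleton (x b)), Set.indicator_apply,
          hcard]
        simp
      have hv : (volume : Measure Circle1) {x b} = 0 := by
        have := AddCircle.volume_closedBall (1 : ℝ) (x := x b) 0
        simpa using this
      simp only [urnKernel, Measure.smul_apply, Measure.add_apply, smul_eq_mul,
        Measure.finsetSum_apply, hsum, hv, mul_zero, zero_add]
      rw [ENNReal.ofReal_div_of_pos hc, ENNReal.ofReal_mul (Nat.cast_nonneg _),
        ENNReal.ofReal_natCast, ENNReal.div_eq_inv_mul, mul_comm (ENNReal.ofReal τ)]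
    · have hpre : (Fin.snoc (α := fun _ => Circle1) x : Circle1 → Fin (k + 1 + 1) → Circle1) ⁻¹'
          (samePartSet P') = ∅ := by
        ext y
        rw [Set.mem_preimage, aux_mem P B hB P' hP' b hb]
        simp [hx]
      rw [hpre, Set.indicator_of_notMem hx, measure_empty]
  rw [urnMeasure, Measure.bind_apply hS (aux_meas_kernel τ (k + 1)).aemeasurable]
  simp_rw [key]
  rw [lintegral_indicator_const hA]

end
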